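/- arXiv:2107.08242 — 4 statements merged into one kernel-verified Lean document; each statement's English description precedes it below -/
import Mathlib

section
/- Let f : ℝ → ℝ be a Schwartz function and ℓ > 0. Then ∫_{ℝ} ∫_{ℝ} (f(x + y) − f(x))² / (cosh(y/ℓ) − 1) dx dy ≤ (4π²/3) ℓ³ ∫_{ℝ} f′(x)² dx. -/
/-!
Averaging the fundamental theorem of calculus along the segment from `x` to `x + y`, Jensen's
inequality and translation invariance give `∫ |f (x + y) - f x|² dx ≤ y² ∫ |f'|²`. It remains to
integrate `y²` against the kernel. For `y > 0`, differentiating the geometric series gives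
`1 / (cosh y - 1) = 2 ∑ n e^{-ny}`, whose Mellin transform is `2 Γ(s) ζ(s - 1)`; at `s = 3` this is
`4 ζ(2) = 2π²/3`, half of the integral over the line.
-/

open Real MeasureTheory

open scoped ENNReal

section TranslationIncrements

variable {E F : Type*} [NormedAddCommGroup E] [NormedSpace ℝ E] [NormedAddCommGroup F]
  [NormedSpace ℝ F] {f : E → F} {p : ℝ}

theorem enorm_add_sub_le_lintegral_fderiv (hf : ContDiff ℝ 1 f) (x v : E) :
    ‖f (x + v) - f x‖ₑ ≤ ∫⁻ t in Set.Icc (0 : ℝ) 1, ‖fderiv ℝ f (x + t • v) v‖ₑ := by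
  have hline : ContDiff ℝ 1 fun t : ℝ => x + t • v := by fun_prop
  have hderiv (t : ℝ) : deriv (fun t : ℝ => f (x + t • v)) t = fderiv ℝ f (x + t • v) v := by
    have hd : HasDerivAt (fun t : ℝ => x + t • v) v t := by
      simpa using ((hasDerivAt_id t).smul_const v).const_add x
    exact ((hf.differentiable one_ne_zero _).hasFDerivAt.comp_hasDerivAt t hd).deriv
  simpa [Function.comp_def, hderiv] using
    enorm_sub_le_lintegral_deriv_of_contDiffOn_Icc (hf.comp hline).contDiffOn zero_le_one

theorem lintegral_rpow_le_lintegral_rpow_of_one_le {α : Type*} [MeasurableSpace α]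
    {μ : Measure α} [IsProbabilityMeasure μ] {g : α → ℝ≥0∞} (hg : AEMeasurable g μ)
    (hp : 1 ≤ p) : (∫⁻ a, g a ∂μ) ^ p ≤ ∫⁻ a, g a ^ p ∂μ := by
  have hnorms := eLpNorm'_le_eLpNorm'_of_exponent_le one_pos hp μ hg.aestronglyMeasurable
  have hp0 : 0 < p := one_pos.trans_le hp
  simpa [eLpNorm', ENNReal.le_rpow_inv_iff hp0] using hnorms

variable [MeasurableSpace E] [BorelSpace E] {μ : Measure E} [SFinite μ] [μ.IsAddRightInvariant]

theorem lintegral_enorm_add_sub_rpow_le (hf : ContDiff ℝ 1 f) (hp : 1 ≤ p) (v : E) :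
    ∫⁻ x, ‖f (x + v) - f x‖ₑ ^ p ∂μ ≤ ∫⁻ x, ‖fderiv ℝ f x v‖ₑ ^ p ∂μ := by
  have hcont : Continuous (Function.uncurry fun (x : E) (t : ℝ) =>
      ‖fderiv ℝ f (x + t • v) v‖ₑ) := by
    have := hf.continuous_fderiv one_ne_zero
    fun_prop
  have : IsProbabilityMeasure (volume.restrict (Set.Icc (0 : ℝ) 1)) := ⟨by simp⟩
  calc ∫⁻ x, ‖f (x + v) - f x‖ₑ ^ p ∂μ
      ≤ ∫⁻ x, (∫⁻ t in Set.Icc (0 : ℝ) 1, ‖fderiv ℝ f (x + t • v) v‖ₑ ^ p) ∂μ := by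
        gcongr with x
        exact (ENNReal.rpow_le_rpow (enorm_add_sub_le_lintegral_fderiv hf x v)
          (zero_le_one.trans hp)).trans (lintegral_rpow_le_lintegral_rpow_of_one_le
            (hcont.uncurry_left x).aemeasurable hp)
    _ = ∫⁻ t in Set.Icc (0 : ℝ) 1, ∫⁻ x, ‖fderiv ℝ f (x + t • v) v‖ₑ ^ p ∂μ :=
        lintegral_lintegral_swap (hcont.aemeasurable.pow_const p)
    _ = ∫⁻ x, ‖fderiv ℝ f x v‖ₑ ^ p ∂μ := by
        simp [lintegral_add_right_eq_self (μ := μ) fun x => ‖fderiv ℝ f x v‖ₑ ^ p]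

theorem integral_norm_add_sub_rpow_le (hf : ContDiff ℝ 1 f) (hp : 1 ≤ p)
    (hf' : Integrable (fun x => ‖fderiv ℝ f x‖ ^ p) μ) (v : E) :
    ∫ x, ‖f (x + v) - f x‖ ^ p ∂μ ≤ ‖v‖ ^ p * ∫ x, ‖fderiv ℝ f x‖ ^ p ∂μ := by
  have hp0 : 0 ≤ p := zero_le_one.trans hp
  have hfc : Continuous f := hf.continuous
  have hcont : Continuous fun x => ‖f (x + v) - f x‖ ^ p := by fun_prop (disch := assumption)
  rw [integral_eq_lintegral_of_nonneg_ae (.of_forall fun x => by positivity)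
    hcont.aestronglyMeasurable, ← integral_const_mul]
  refine ENNReal.toReal_le_of_le_ofReal (by positivity) ?_
  calc ∫⁻ x, ENNReal.ofReal (‖f (x + v) - f x‖ ^ p) ∂μ
      = ∫⁻ x, ‖f (x + v) - f x‖ₑ ^ p ∂μ := by
        simp_rw [← ENNReal.ofReal_rpow_of_nonneg (norm_nonneg _) hp0, ofReal_norm]
    _ ≤ ∫⁻ x, ‖fderiv ℝ f x v‖ₑ ^ p ∂μ := lintegral_enorm_add_sub_rpow_le hf hp v
    _ ≤ ∫⁻ x, ENNReal.ofReal (‖v‖ ^ p * ‖fderiv ℝ f x‖ ^ p) ∂μ := by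
        gcongr with x
        rw [← ofReal_norm, ENNReal.ofReal_rpow_of_nonneg (norm_nonneg _) hp0,
          ← mul_rpow (norm_nonneg _) (norm_nonneg _), mul_comm]
        gcongr
        exact (fderiv ℝ f x).le_opNorm v
    _ = ENNReal.ofReal (∫ x, ‖v‖ ^ p * ‖fderiv ℝ f x‖ ^ p ∂μ) :=
        (ofReal_integral_eq_lintegral_ofReal (hf'.const_mul _)
          (.of_forall fun x => by positivity)).symm

theorem integral_integral_norm_add_sub_rpow_mul_le {ν : Measure E} {K : E → ℝ}
    (hf : ContDiff ℝ 1 f) (hp : 1 ≤ p) (hf' : Integrable (fun x => ‖fderiv ℝ f x‖ ^ p) μ)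
    (hK : ∀ v, 0 ≤ K v) (hK' : Integrable (fun v => ‖v‖ ^ p * K v) ν) :
    ∫ v, ∫ x, ‖f (x + v) - f x‖ ^ p * K v ∂μ ∂ν ≤
      (∫ v, ‖v‖ ^ p * K v ∂ν) * ∫ x, ‖fderiv ℝ f x‖ ^ p ∂μ := by
  rw [← integral_mul_const]
  refine integral_mono_of_nonneg
    (.of_forall fun v => integral_nonneg fun x => mul_nonneg (by positivity) (hK v))
    (hK'.mul_const _) (.of_forall fun v => ?_)
  calc ∫ x, ‖f (x + v) - f x‖ ^ p * K v ∂μ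
      = (∫ x, ‖f (x + v) - f x‖ ^ p ∂μ) * K v := integral_mul_const _ _
    _ ≤ (‖v‖ ^ p * ∫ x, ‖fderiv ℝ f x‖ ^ p ∂μ) * K v :=
        mul_le_mul_of_nonneg_right (integral_norm_add_sub_rpow_le hf hp hf' v) (hK v)
    _ = ‖v‖ ^ p * K v * ∫ x, ‖fderiv ℝ f x‖ ^ p ∂μ := mul_right_comm _ _ _

end TranslationIncrements

section CoshKernel

theorem cosh_sub_one_eq_sq_div_exp_neg (y : ℝ) :
    cosh y - 1 = (1 - exp (-y)) ^ 2 / (2 * exp (-y)) := by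
  have hexp : exp y = (exp (-y))⁻¹ := by rw [exp_neg, inv_inv]
  rw [cosh_eq, hexp]
  field_simp
  ring

theorem hasSum_inv_cosh_sub_one {y : ℝ} (hy : 0 < y) :
    HasSum (fun n : ℕ => 2 * n * exp (-n * y)) (cosh y - 1)⁻¹ := by
  have hnorm : ‖exp (-y)‖ < 1 := by simpa using hy
  have h := (hasSum_coe_mul_geometric_of_norm_lt_one hnorm).mul_left 2
  simp_rw [← exp_nat_mul, mul_neg, ← neg_mul, ← mul_assoc] at h
  rwa [cosh_sub_one_eq_sq_div_exp_neg, inv_div, mul_div_assoc]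

theorem mellin_inv_cosh_sub_one {s : ℂ} (hs : 2 < s.re) :
    mellin (fun y : ℝ => (((cosh y - 1)⁻¹ : ℝ) : ℂ)) s =
      2 * Complex.Gamma s * riemannZeta (s - 1) := by
  have hs' : 1 < s.re - 1 := by linarith
  have hsummable : Summable fun n : ℕ => ‖((2 * n : ℝ) : ℂ)‖ / (n : ℝ) ^ s.re := by
    refine ((summable_one_div_nat_rpow.2 hs').mul_left 2).congr fun n => ?_
    rw [rpow_sub_one' n.cast_nonneg (by linarith), one_div_div, Complex.norm_of_nonneg
      (by positivity), mul_div_assoc]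
  have hsum : HasSum (fun n : ℕ => Complex.Gamma s * (2 * n : ℝ) / ((n : ℝ) : ℂ) ^ s)
      (mellin (fun y : ℝ => (((cosh y - 1)⁻¹ : ℝ) : ℂ)) s) := by
    refine hasSum_mellin (p := fun n : ℕ => (n : ℝ)) (fun n => ?_) (by linarith)
      (fun y hy => mod_cast Complex.hasSum_ofReal.2 (hasSum_inv_cosh_sub_one hy)) hsummable
    rcases n.eq_zero_or_pos with rfl | hn
    · simp
    · exact .inr (mod_cast hn)
  rw [← hsum.tsum_eq, zeta_eq_tsum_one_div_nat_cpow (by simpa using hs'), ← tsum_mul_left]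
  refine tsum_congr fun n => ?_
  rcases n.eq_zero_or_pos with rfl | hn
  · have hs₀ : s - 1 ≠ 0 := Complex.ne_zero_of_one_lt_re (by simpa using hs')
    simp [Complex.zero_cpow hs₀]
  · have hn' : (n : ℂ) ≠ 0 := mod_cast hn.ne'
    rw [Complex.cpow_sub _ _ hn', Complex.cpow_one]
    push_cast
    field_simp

theorem integral_Ioi_sq_div_cosh_sub_one :
    ∫ y in Set.Ioi (0 : ℝ), y ^ 2 / (cosh y - 1) = 2 * π ^ 2 / 3 := by
  have hmellin := mellin_inv_cosh_sub_one (s := 3) (by norm_num [Complex.re_ofNat])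
  have hΓ : Complex.Gamma 3 = 2 := by simp
  simp only [mellin, hΓ, show (3 : ℂ) - 1 = 2 by norm_num, riemannZeta_two, Complex.cpow_ofNat,
    smul_eq_mul] at hmellin
  apply Complex.ofReal_injective
  rw [← integral_complex_ofReal]
  push_cast [div_eq_mul_inv] at hmellin ⊢
  rw [hmellin]
  ring

theorem integral_sq_div_cosh_sub_one : ∫ y : ℝ, y ^ 2 / (cosh y - 1) = 4 * π ^ 2 / 3 := by
  have habs := integral_comp_abs (f := fun y => y ^ 2 / (cosh y - 1))
  simp only [sq_abs, cosh_abs] at habs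
  rw [habs, integral_Ioi_sq_div_cosh_sub_one]
  ring

theorem integrable_sq_div_cosh_sub_one : Integrable fun y : ℝ => y ^ 2 / (cosh y - 1) :=
  .of_integral_ne_zero (by rw [integral_sq_div_cosh_sub_one]; positivity)

theorem sq_div_cosh_div_sub_one_eq {ℓ : ℝ} (hℓ : ℓ ≠ 0) (y : ℝ) :
    y ^ 2 / (cosh (y / ℓ) - 1) = ℓ ^ 2 * ((y / ℓ) ^ 2 / (cosh (y / ℓ) - 1)) := by
  field_simp

theorem integrable_sq_div_cosh_div_sub_one {ℓ : ℝ} (hℓ : ℓ ≠ 0) :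
    Integrable fun y : ℝ => y ^ 2 / (cosh (y / ℓ) - 1) := by
  simp_rw [sq_div_cosh_div_sub_one_eq hℓ]
  exact (integrable_sq_div_cosh_sub_one.comp_div hℓ).const_mul _

theorem integral_sq_div_cosh_div_sub_one {ℓ : ℝ} (hℓ : 0 < ℓ) :
    ∫ y : ℝ, y ^ 2 / (cosh (y / ℓ) - 1) = 4 * π ^ 2 / 3 * ℓ ^ 3 := by
  simp_rw [sq_div_cosh_div_sub_one_eq hℓ.ne']
  rw [integral_const_mul, Measure.integral_comp_div (fun y => y ^ 2 / (cosh y - 1)),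
    integral_sq_div_cosh_sub_one, abs_of_pos hℓ, smul_eq_mul]
  ring

end CoshKernel

theorem strip_jump_form_cosh_sub_one_bound_general {F : Type*} [NormedAddCommGroup F]
    [NormedSpace ℝ F] {f : ℝ → F} (hf : ContDiff ℝ 1 f) (hf' : MemLp (deriv f) 2)
    {ℓ : ℝ} (hℓ : 0 < ℓ) :
    ∫ y : ℝ, ∫ x : ℝ, ‖f (x + y) - f x‖ ^ 2 / (cosh (y / ℓ) - 1) ≤
      (4 * π ^ 2 / 3) * ℓ ^ 3 * ∫ x : ℝ, ‖deriv f x‖ ^ 2 := by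
  have hkernel : ∀ y : ℝ, 0 ≤ (cosh (y / ℓ) - 1)⁻¹ := fun y =>
    inv_nonneg.2 (sub_nonneg.2 (one_le_cosh _))
  have hmoment := integrable_sq_div_cosh_div_sub_one hℓ.ne'
  rw [← integral_sq_div_cosh_div_sub_one hℓ]
  have hbound := integral_integral_norm_add_sub_rpow_mul_le (p := 2) (μ := volume) (ν := volume) hf
    one_le_two (by simpa [norm_deriv_eq_norm_fderiv] using hf'.integrable_norm_pow two_ne_zero)
    hkernel (by simpa [div_eq_mul_inv] using hmoment)
  simpa [div_eq_mul_inv, norm_deriv_eq_norm_fderiv] using hbound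

theorem strip_jump_form_cosh_sub_one_bound (f : SchwartzMap ℝ ℝ) (ℓ : ℝ) (hℓ : 0 < ℓ) :
    ∫ y : ℝ, ∫ x : ℝ, (f (x + y) - f x) ^ 2 / (Real.cosh (y / ℓ) - 1) ≤
      (4 * π ^ 2 / 3) * ℓ ^ 3 * ∫ x : ℝ, (deriv (⇑f) x) ^ 2 := by
  have hderiv : MemLp (deriv f) 2 := by
    simpa only [← funext (SchwartzMap.derivCLM_apply ℝ f)] using
      (SchwartzMap.derivCLM ℝ ℝ f).memLp 2
  simpa using strip_jump_form_cosh_sub_one_bound_general (f.smooth 1) hderiv hℓ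
end

section
/- Let f : ℝ → ℝ be a Schwartz function and ℓ > 0. Then ∫_{ℝ} ∫_{ℝ} (f(x + y) − f(x))² / (cosh(y/ℓ) + 1) dx dy ≤ (2π²/3) ℓ³ ∫_{ℝ} f′(x)² dx. -/
open Real MeasureTheory

/-!
Increments of a function over a fixed translation `v` are averages of its derivative along `v`:
`f (x + v) - f x = ∫₀¹ ∂ᵥf (x + t v) dt`. Jensen's inequality, Tonelli's theorem and translation
invariance turn this into `‖f (· + v) - f‖ₚ ≤ ‖∂ᵥf‖ₚ`. On the real line the right-hand side is
`|y| ‖f'‖ₚ`, so a jump form with kernel `k` is at most `(∫ |y|ᵖ k(y) dy) ‖f'‖ₚᵖ`.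

For `k(y) = 1 / (cosh (y / ℓ) + 1)` and `p = 2` the constant scales as `ℓ³`. At `ℓ = 1` it comes
from the Mellin transform at `s = 3` of `1 / (cosh y + 1) = 2 ∑ (-1)ⁿ⁺¹ n e⁻ⁿʸ`, and the resulting
sum `∑ (-1)ⁿ / n² = -π² / 12` is read off the second Bernoulli polynomial at `1 / 2`.
-/

section Translation

open Set
open scoped ENNReal

theorem hasDerivAt_comp_add_smul_of_hasLineDerivAt {𝕜 F W : Type*} [NontriviallyNormedField 𝕜]
    [NormedAddCommGroup F] [NormedSpace 𝕜 F] [AddCommGroup W] [Module 𝕜 W] {f : W → F} {f' : F}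
    {x v : W} {t : 𝕜} (hf : HasLineDerivAt 𝕜 f f' (x + t • v) v) :
    HasDerivAt (fun s : 𝕜 ↦ f (x + s • v)) f' t := by
  have h := hf.scomp_of_eq t ((hasDerivAt_id t).sub_const t) (by simp)
  simpa [Function.comp_def, sub_smul, add_assoc] using h

variable {E : Type*} [NormedAddCommGroup E] [NormedSpace ℝ E] [CompleteSpace E]

theorem enorm_sub_le_lintegral_enorm_of_hasDerivAt {g g' : ℝ → E} {a b : ℝ} (hab : a ≤ b)
    (hg : ∀ t ∈ Icc a b, HasDerivAt g (g' t) t) :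
    ‖g b - g a‖ₑ ≤ ∫⁻ t in Ioc a b, ‖g' t‖ₑ := by
  rcases eq_or_ne (∫⁻ t in Ioc a b, ‖g' t‖ₑ) ∞ with htop | hfin
  · exact htop ▸ le_top
  have hmeas : AEStronglyMeasurable g' (volume.restrict (Ioc a b)) :=
    (stronglyMeasurable_deriv g).aestronglyMeasurable.congr <|
      (ae_restrict_mem measurableSet_Ioc).mono fun t ht ↦ (hg t (Ioc_subset_Icc_self ht)).deriv
  have hint : IntervalIntegrable g' volume a b :=
    (intervalIntegrable_iff_integrableOn_Ioc_of_le hab).2 ⟨hmeas, hfin.lt_top⟩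
  rw [← intervalIntegral.integral_eq_sub_of_hasDerivAt (by rwa [uIcc_of_le hab]) hint,
    intervalIntegral.integral_of_le hab]
  exact enorm_integral_le_lintegral_enorm _

theorem rpow_lintegral_le_lintegral_rpow {α : Type*} [MeasurableSpace α] {μ : Measure α}
    [IsProbabilityMeasure μ] {p : ℝ} (hp : 1 ≤ p) {g : α → ℝ≥0∞} (hg : AEMeasurable g μ) :
    (∫⁻ a, g a ∂μ) ^ p ≤ ∫⁻ a, g a ^ p ∂μ := by
  have h := eLpNorm'_le_eLpNorm'_of_exponent_le one_pos hp μ hg.aestronglyMeasurable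
  simp only [eLpNorm', enorm_eq_self, ENNReal.rpow_one, div_one, one_div] at h
  rwa [ENNReal.le_rpow_inv_iff (by positivity)] at h

section LineDeriv

variable {V : Type*} [AddCommGroup V] [Module ℝ V] [MeasurableSpace V] [MeasurableAdd₂ V]
  [MeasurableSMul ℝ V] {μ : Measure V} [SFinite μ] [μ.IsAddRightInvariant]
  {f f' : V → E} {v : V} {p : ℝ}

theorem lintegral_enorm_add_sub_rpow_le_of_hasLineDerivAt (hp : 1 ≤ p)
    (hf : ∀ x, HasLineDerivAt ℝ f (f' x) x v) (hf' : StronglyMeasurable f') :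
    ∫⁻ x, ‖f (x + v) - f x‖ₑ ^ p ∂μ ≤ ∫⁻ x, ‖f' x‖ₑ ^ p ∂μ := by
  have : IsProbabilityMeasure (volume.restrict (Ioc (0 : ℝ) 1)) := ⟨by simp⟩
  have hmeas : Measurable fun q : V × ℝ ↦ ‖f' (q.1 + q.2 • v)‖ₑ :=
    hf'.enorm.comp (measurable_fst.add (measurable_snd.smul_const v))
  have hpt (x : V) :
      ‖f (x + v) - f x‖ₑ ^ p ≤ ∫⁻ t in Ioc (0 : ℝ) 1, ‖f' (x + t • v)‖ₑ ^ p := calc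
    ‖f (x + v) - f x‖ₑ ^ p ≤ (∫⁻ t in Ioc (0 : ℝ) 1, ‖f' (x + t • v)‖ₑ) ^ p := by
      gcongr
      simpa using enorm_sub_le_lintegral_enorm_of_hasDerivAt zero_le_one
        fun t _ ↦ hasDerivAt_comp_add_smul_of_hasLineDerivAt (hf (x + t • v))
    _ ≤ _ := rpow_lintegral_le_lintegral_rpow hp (hmeas.comp measurable_prodMk_left).aemeasurable
  calc ∫⁻ x, ‖f (x + v) - f x‖ₑ ^ p ∂μ
      ≤ ∫⁻ x, (∫⁻ t in Ioc (0 : ℝ) 1, ‖f' (x + t • v)‖ₑ ^ p) ∂μ := lintegral_mono hpt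
    _ = ∫⁻ t in Ioc (0 : ℝ) 1, (∫⁻ x, ‖f' (x + t • v)‖ₑ ^ p ∂μ) :=
      lintegral_lintegral_swap (hmeas.pow_const p).aemeasurable
    _ = ∫⁻ x, ‖f' x‖ₑ ^ p ∂μ := by
      simp only [lintegral_add_right_eq_self fun x ↦ ‖f' x‖ₑ ^ p, lintegral_const, measure_univ,
        mul_one]

theorem integral_norm_add_sub_rpow_le_of_hasLineDerivAt (hp : 1 ≤ p)
    (hf : ∀ x, HasLineDerivAt ℝ f (f' x) x v) (hf' : StronglyMeasurable f')
    (hint : Integrable (fun x ↦ ‖f' x‖ ^ p) μ) :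
    ∫ x, ‖f (x + v) - f x‖ ^ p ∂μ ≤ ∫ x, ‖f' x‖ ^ p ∂μ := by
  have henorm (e : E) : ‖‖e‖ ^ p‖ₑ = ‖e‖ₑ ^ p := by
    rw [Real.enorm_rpow_of_nonneg (norm_nonneg e) (by positivity), enorm_norm]
  rw [← ENNReal.ofReal_le_ofReal_iff (integral_nonneg fun x ↦ by positivity)]
  calc ENNReal.ofReal (∫ x, ‖f (x + v) - f x‖ ^ p ∂μ)
      ≤ ‖∫ x, ‖f (x + v) - f x‖ ^ p ∂μ‖ₑ := Real.ofReal_le_enorm _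
    _ ≤ ∫⁻ x, ‖‖f (x + v) - f x‖ ^ p‖ₑ ∂μ := enorm_integral_le_lintegral_enorm _
    _ = ∫⁻ x, ‖f (x + v) - f x‖ₑ ^ p ∂μ := by simp only [henorm]
    _ ≤ ∫⁻ x, ‖f' x‖ₑ ^ p ∂μ := lintegral_enorm_add_sub_rpow_le_of_hasLineDerivAt hp hf hf'
    _ = ENNReal.ofReal (∫ x, ‖f' x‖ ^ p ∂μ) := by
      rw [ofReal_integral_eq_lintegral_ofReal hint (.of_forall fun x ↦ by positivity)]
      simp only [← Real.enorm_of_nonneg (rpow_nonneg (norm_nonneg _) p), henorm]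

end LineDeriv

variable {f : ℝ → E} {p : ℝ}

theorem integral_norm_add_sub_rpow_le_abs_rpow_mul (hp : 1 ≤ p) (hf : Differentiable ℝ f)
    (hf' : Integrable fun x ↦ ‖deriv f x‖ ^ p) (y : ℝ) :
    ∫ x, ‖f (x + y) - f x‖ ^ p ≤ |y| ^ p * ∫ x, ‖deriv f x‖ ^ p := by
  have hnorm (x : ℝ) : ‖y • deriv f x‖ ^ p = |y| ^ p * ‖deriv f x‖ ^ p := by
    rw [norm_smul, norm_eq_abs, mul_rpow (abs_nonneg y) (norm_nonneg _)]
  have hline (x : ℝ) : HasLineDerivAt ℝ f (y • deriv f x) x y := by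
    simpa using (hf x).hasFDerivAt.hasLineDerivAt y
  have h := integral_norm_add_sub_rpow_le_of_hasLineDerivAt (μ := volume) hp hline
    ((stronglyMeasurable_deriv f).const_smul y) (by simpa only [hnorm] using hf'.const_mul _)
  simpa only [hnorm, integral_const_mul] using h

theorem integral_integral_norm_add_sub_rpow_mul_le_s12 (hp : 1 ≤ p) (hf : Differentiable ℝ f)
    (hf' : Integrable fun x ↦ ‖deriv f x‖ ^ p) {k : ℝ → ℝ} (hk : ∀ y, 0 ≤ k y)
    (hint : Integrable fun y ↦ |y| ^ p * k y) :
    ∫ y, ∫ x, ‖f (x + y) - f x‖ ^ p * k y ≤ (∫ y, |y| ^ p * k y) * ∫ x, ‖deriv f x‖ ^ p := by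
  rw [← integral_mul_const]
  refine integral_mono_of_nonneg
    (.of_forall fun y ↦ integral_nonneg fun x ↦ mul_nonneg (by positivity) (hk y))
    (hint.mul_const _) (.of_forall fun y ↦ ?_)
  calc ∫ x, ‖f (x + y) - f x‖ ^ p * k y
      = (∫ x, ‖f (x + y) - f x‖ ^ p) * k y := integral_mul_const _ _
    _ ≤ (|y| ^ p * ∫ x, ‖deriv f x‖ ^ p) * k y := by
      gcongr
      exacts [hk y, integral_norm_add_sub_rpow_le_abs_rpow_mul hp hf hf' y]
    _ = |y| ^ p * k y * ∫ x, ‖deriv f x‖ ^ p := mul_right_comm _ _ _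

end Translation

section CoshKernel

theorem hasSum_neg_one_pow_div_nat_pow_two_mul {k : ℕ} (hk : k ≠ 0) :
    HasSum (fun n : ℕ ↦ (-1 : ℝ) ^ n / (n : ℝ) ^ (2 * k))
      ((-1) ^ (k + 1) * (2 * π) ^ (2 * k) / 2 / (2 * k).factorial *
        ((2 / 2 ^ (2 * k) - 1) * bernoulli (2 * k))) := by
  rw [← bernoulliFun_eval_half]
  refine (hasSum_one_div_nat_pow_mul_cos hk (x := 2⁻¹) (by norm_num)).congr_fun fun n ↦ ?_
  rw [← cos_nat_mul_pi, show 2 * π * n * 2⁻¹ = n * π by ring, one_div_mul_eq_div]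

theorem hasSum_inv_cosh_add_one {y : ℝ} (hy : 0 < y) :
    HasSum (fun n : ℕ ↦ 2 * (-1) ^ (n + 1) * n * rexp (-n * y)) (cosh y + 1)⁻¹ := by
  have h := (hasSum_coe_mul_geometric_of_norm_lt_one (r := -rexp (-y))
    (by simpa using hy)).mul_left (-2)
  have hsum : -2 * (-rexp (-y) / (1 - -rexp (-y)) ^ 2) = (cosh y + 1)⁻¹ := by
    have hcosh : cosh y + 1 = (1 + rexp (-y)) ^ 2 / (2 * rexp (-y)) := by
      rw [cosh_eq, Real.exp_neg]
      field_simp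
      ring
    rw [hcosh, inv_div]
    ring
  rw [hsum] at h
  refine h.congr_fun fun n ↦ ?_
  rw [neg_pow (rexp (-y)), ← Real.exp_nat_mul, neg_mul_comm]
  ring

theorem hasSum_mellin_inv_cosh_add_one {s : ℂ} (hs : 2 < s.re) :
    HasSum (fun n : ℕ ↦ Complex.Gamma s * (2 * (-1) ^ (n + 1) * n) / n ^ s)
      (mellin (fun y ↦ (((cosh y + 1)⁻¹ : ℝ) : ℂ)) s) := by
  have hs' : s.re ≠ 0 := by linarith
  refine hasSum_mellin (p := fun n : ℕ ↦ n) (a := fun n : ℕ ↦ 2 * (-1) ^ (n + 1) * n)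
    (fun n ↦ ?_) (by linarith) (fun y hy ↦ ?_) ?_
  · rcases n.eq_zero_or_pos with rfl | hn
    · simp
    · exact .inr (by positivity)
  · exact_mod_cast hasSum_inv_cosh_add_one hy
  · refine ((Real.summable_nat_rpow_inv (p := s.re - 1)).2 (by linarith)).mul_left 2 |>.congr
      fun n ↦ ?_
    rcases n.eq_zero_or_pos with rfl | hn
    · simp [hs', Real.zero_rpow (show s.re - 1 ≠ 0 by linarith)]
    · rw [Real.rpow_sub_one (by positivity)]
      simp only [inv_div, norm_mul, Complex.norm_ofNat, norm_pow, norm_neg, norm_one, one_pow,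
        mul_one, Complex.norm_natCast]
      field_simp

theorem hasSum_neg_one_pow_div_nat_sq :
    HasSum (fun n : ℕ ↦ (-1 : ℝ) ^ n / (n : ℝ) ^ 2) (-(π ^ 2 / 12)) := by
  have h := hasSum_neg_one_pow_div_nat_pow_two_mul one_ne_zero
  rw [mul_one, bernoulli_two] at h
  convert h using 1
  simp only [Nat.factorial]
  push_cast
  ring

theorem integral_Ioi_sq_mul_inv_cosh_add_one :
    ∫ y in Set.Ioi (0 : ℝ), y ^ 2 * (cosh y + 1)⁻¹ = π ^ 2 / 3 := by
  have hmellin : mellin (fun y ↦ (((cosh y + 1)⁻¹ : ℝ) : ℂ)) 3 =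
      ((∫ y in Set.Ioi (0 : ℝ), y ^ 2 * (cosh y + 1)⁻¹ : ℝ) : ℂ) := by
    rw [mellin, ← integral_complex_ofReal]
    refine setIntegral_congr_fun measurableSet_Ioi fun y _ ↦ ?_
    norm_num
  have hsum := hasSum_mellin_inv_cosh_add_one (s := 3) (by norm_num)
  rw [hmellin] at hsum
  have hterm (n : ℕ) : Complex.Gamma 3 * (2 * (-1) ^ (n + 1) * n) / (n : ℂ) ^ (3 : ℂ) =
      ((-4 * ((-1) ^ n / (n : ℝ) ^ 2) : ℝ) : ℂ) := by
    rcases n.eq_zero_or_pos with rfl | hn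
    · simp
    · have : (n : ℂ) ≠ 0 := mod_cast hn.ne'
      have hG : Complex.Gamma 3 = 2 := by simp
      rw [hG, Complex.cpow_ofNat]
      push_cast
      field_simp
      ring
  simp only [hterm] at hsum
  rw [(Complex.hasSum_ofReal.1 hsum).unique (hasSum_neg_one_pow_div_nat_sq.mul_left _)]
  ring

theorem integral_sq_mul_inv_cosh_add_one :
    ∫ y : ℝ, y ^ 2 * (cosh y + 1)⁻¹ = 2 * π ^ 2 / 3 := by
  have h := integral_comp_abs (f := fun y : ℝ ↦ y ^ 2 * (cosh y + 1)⁻¹)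
  simp only [sq_abs, cosh_abs] at h
  rw [h, integral_Ioi_sq_mul_inv_cosh_add_one]
  ring

theorem integral_sq_mul_inv_cosh_div_add_one {ℓ : ℝ} (hℓ : 0 < ℓ) :
    ∫ y : ℝ, y ^ 2 * (cosh (y / ℓ) + 1)⁻¹ = 2 * π ^ 2 / 3 * ℓ ^ 3 := calc
  ∫ y : ℝ, y ^ 2 * (cosh (y / ℓ) + 1)⁻¹
      = ∫ y : ℝ, ℓ ^ 2 * ((y / ℓ) ^ 2 * (cosh (y / ℓ) + 1)⁻¹) := by
    congr with y
    field_simp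
  _ = ℓ ^ 2 * (ℓ * ∫ y : ℝ, y ^ 2 * (cosh y + 1)⁻¹) := by
    rw [integral_const_mul, Measure.integral_comp_div (fun y ↦ y ^ 2 * (cosh y + 1)⁻¹),
      abs_of_pos hℓ, smul_eq_mul]
  _ = 2 * π ^ 2 / 3 * ℓ ^ 3 := by
    rw [integral_sq_mul_inv_cosh_add_one]
    ring

end CoshKernel

theorem strip_jump_form_cosh_add_one_bound_general {E : Type*} [NormedAddCommGroup E]
    [NormedSpace ℝ E] [CompleteSpace E] {f : ℝ → E} (hf : Differentiable ℝ f)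
    (hf' : Integrable fun x ↦ ‖deriv f x‖ ^ 2) {ℓ : ℝ} (hℓ : 0 < ℓ) :
    ∫ y : ℝ, ∫ x : ℝ, ‖f (x + y) - f x‖ ^ 2 / (cosh (y / ℓ) + 1) ≤
      (2 * π ^ 2 / 3) * ℓ ^ 3 * ∫ x : ℝ, ‖deriv f x‖ ^ 2 := by
  have hkernel := integral_sq_mul_inv_cosh_div_add_one hℓ
  have hint : Integrable fun y : ℝ ↦ y ^ 2 * (cosh (y / ℓ) + 1)⁻¹ :=
    .of_integral_ne_zero (by rw [hkernel]; positivity)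
  have h := integral_integral_norm_add_sub_rpow_mul_le_s12 (k := fun y ↦ (cosh (y / ℓ) + 1)⁻¹)
    one_le_two hf (by simpa only [rpow_two] using hf') (fun y ↦ by positivity)
    (by simpa only [rpow_two, sq_abs] using hint)
  simp only [rpow_two, sq_abs, hkernel] at h
  simpa only [div_eq_mul_inv] using h

theorem strip_jump_form_cosh_add_one_bound (f : SchwartzMap ℝ ℝ) (ℓ : ℝ) (hℓ : 0 < ℓ) :
    ∫ y : ℝ, ∫ x : ℝ, (f (x + y) - f x) ^ 2 / (Real.cosh (y / ℓ) + 1) ≤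
      (2 * π ^ 2 / 3) * ℓ ^ 3 * ∫ x : ℝ, (deriv (⇑f) x) ^ 2 := by
  have hf' : MemLp (deriv f) 2 := (SchwartzMap.derivCLM ℝ ℝ f).memLp 2 volume
  simpa using strip_jump_form_cosh_add_one_bound_general f.differentiable hf'.norm.integrable_sq hℓ
end

section
/- Let f : ℝ → ℝ be a Schwartz function. Then lim_{ℓ → ∞} ∫_{ℝ} ∫_{ℝ} (f(x + y) − f(x))² / (ℓ² (cosh(y/ℓ) − 1)) dx dy = 2 ∫_{ℝ} ∫_{ℝ} (f(x + y) − f(x))² / y² dx dy, and the right-hand side is finite. -/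
open Real MeasureTheory Filter

/-!
Since `cosh t - 1 = 2 sinh² (t / 2)` and `|t| ≤ |sinh t|`, the strip kernel
`(ℓ² (cosh (y / ℓ) - 1))⁻¹` is dominated by its limit `2 / y²`, so dominated convergence reduces
everything to the finiteness of the Cauchy form. For the latter, `∫ ‖f (x + y) - f x‖² dx` is
bounded by `4 ‖f‖²` (translation invariance) and by `y² ‖f'‖²` (Cauchy–Schwarz and Tonelli), and
`min 1 y² / y²` is integrable on the line.
-/

open Set
open scoped ENNReal Topology

section SquareIntegral

variable {α : Type*} [MeasurableSpace α] {μ : Measure α}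

lemma eLpNorm_two_sq {ε : Type*} [ENorm ε] (u : α → ε) :
    eLpNorm u 2 μ ^ 2 = ∫⁻ a, ‖u a‖ₑ ^ 2 ∂μ := by
  simpa using eLpNorm_nnreal_pow_eq_lintegral (f := u) (μ := μ) (two_ne_zero (α := NNReal))

lemma sq_lintegral_le_measure_univ_mul {g : α → ℝ≥0∞} (hg : AEMeasurable g μ) :
    (∫⁻ a, g a ∂μ) ^ 2 ≤ μ univ * ∫⁻ a, g a ^ 2 ∂μ := by
  have holder := ENNReal.lintegral_mul_le_Lp_mul_Lq μ Real.HolderConjugate.two_two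
    (aemeasurable_const (b := 1)) hg
  have hsq (a : ℝ≥0∞) : (a ^ (2⁻¹ : ℝ)) ^ 2 = a := ENNReal.rpow_inv_natCast_pow two_ne_zero a
  simpa [mul_pow, hsq] using pow_le_pow_left' holder 2

end SquareIntegral

section JumpForm

variable {G E : Type*} [Add G] [NormedAddCommGroup E]

/-- The energy density at `(x, y)` of the jump `f x → f (x + y)`, weighted by the rate `K y`. -/
def jumpDensity (K : G → ℝ) (f : G → E) (p : G × G) : ℝ :=
  ‖f (p.1 + p.2) - f p.1‖ ^ 2 * K p.2

/-- The quadratic form of a translation-invariant jump process with jump kernel `K`, as an iterated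
integral (start point first); it is the total energy only where `jumpDensity K f` is integrable. -/
noncomputable def jumpForm [MeasurableSpace G] (μ : Measure G) (K : G → ℝ) (f : G → E) : ℝ :=
  ∫ y, ∫ x, jumpDensity K f (x, y) ∂μ ∂μ

lemma jumpDensity_const_mul (c : ℝ) (K : G → ℝ) (f : G → E) :
    jumpDensity (fun y ↦ c * K y) f = fun p ↦ c * jumpDensity K f p :=
  funext fun _ ↦ mul_left_comm _ c _

lemma jumpForm_const_mul [MeasurableSpace G] (μ : Measure G) (c : ℝ) (K : G → ℝ) (f : G → E) :
    jumpForm μ (fun y ↦ c * K y) f = c * jumpForm μ K f := by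
  simp only [jumpForm, jumpDensity_const_mul, integral_const_mul]

end JumpForm

section InvariantMeasure

variable {G E : Type*} [AddGroup G] [MeasurableSpace G] [MeasurableAdd₂ G] [NormedAddCommGroup E]
  {μ : Measure G} [μ.IsAddRightInvariant] {K : G → ℝ} {f : G → E}

lemma eLpNorm_translate_sub_le {p : ℝ≥0∞} (hp : 1 ≤ p) (hf : AEStronglyMeasurable f μ) (y : G) :
    eLpNorm (fun x ↦ f (x + y) - f x) p μ ≤ 2 * eLpNorm f p μ := by
  have hmp := measurePreserving_add_right μ y
  calc eLpNorm (fun x ↦ f (x + y) - f x) p μ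
      ≤ eLpNorm (fun x ↦ f (x + y)) p μ + eLpNorm f p μ :=
        eLpNorm_sub_le (hf.comp_measurePreserving hmp) hf hp
    _ = 2 * eLpNorm f p μ := by
        rw [two_mul]
        congr 1
        exact eLpNorm_comp_measurePreserving hf hmp

variable [SFinite μ]

lemma aestronglyMeasurable_jumpDensity (hK : AEStronglyMeasurable K μ)
    (hf : AEStronglyMeasurable f μ) : AEStronglyMeasurable (jumpDensity K f) (μ.prod μ) := by
  have hshift : AEStronglyMeasurable (fun p : G × G ↦ f (p.1 + p.2)) (μ.prod μ) :=
    hf.comp_fst.comp_measurePreserving (measurePreserving_add_prod μ μ)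
  exact ((hshift.sub hf.comp_fst).norm.pow 2).mul hK.comp_snd

lemma tendsto_jumpForm_of_norm_le_limit {ι : Type*} {l : Filter ι} [l.IsCountablyGenerated]
    {k : ι → G → ℝ} (hk : ∀ᶠ i in l, AEStronglyMeasurable (k i) μ)
    (hf : AEStronglyMeasurable f μ) (hle : ∀ᶠ i in l, ∀ᵐ y ∂μ, ‖k i y‖ ≤ K y)
    (hlim : ∀ᵐ y ∂μ, Tendsto (k · y) l (𝓝 (K y)))
    (hint : Integrable (jumpDensity K f) (μ.prod μ)) :
    Tendsto (fun i ↦ jumpForm μ (k i) f) l (𝓝 (jumpForm μ K f)) := by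
  have hae {P : G → Prop} (h : ∀ᵐ y ∂μ, P y) : ∀ᵐ p ∂μ.prod μ, P p.2 :=
    Measure.quasiMeasurePreserving_snd.ae h
  have hmeas : ∀ᶠ i in l, AEStronglyMeasurable (jumpDensity (k i) f) (μ.prod μ) :=
    hk.mono fun i hi ↦ aestronglyMeasurable_jumpDensity hi hf
  have hdom : ∀ᶠ i in l, ∀ᵐ p ∂μ.prod μ, ‖jumpDensity (k i) f p‖ ≤ jumpDensity K f p := by
    filter_upwards [hle] with i hi
    filter_upwards [hae hi] with p hp
    rw [jumpDensity, norm_mul, norm_pow, norm_norm]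
    exact mul_le_mul_of_nonneg_left hp (by positivity)
  have htends := tendsto_integral_filter_of_dominated_convergence _ hmeas hdom hint
    ((hae hlim).mono fun p hp ↦ hp.const_mul (‖f (p.1 + p.2) - f p.1‖ ^ 2))
  refine (integral_prod_symm _ hint ▸ htends).congr' ?_
  filter_upwards [hmeas, hdom] with i hi hi'
  exact integral_prod_symm _ (hint.mono' hi hi')

lemma integrable_jumpDensity_of_eLpNorm_translate_sub_le {ω : G → ℝ} {C : ℝ≥0∞}
    (hK : AEStronglyMeasurable K μ) (hf : AEStronglyMeasurable f μ) (hC : C ≠ ∞)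
    (hω : ∀ y, eLpNorm (fun x ↦ f (x + y) - f x) 2 μ ^ 2 ≤ C * ‖ω y‖ₑ)
    (hint : Integrable (fun y ↦ ω y * K y) μ) : Integrable (jumpDensity K f) (μ.prod μ) := by
  have hmeas := aestronglyMeasurable_jumpDensity hK hf
  refine ⟨hmeas, ?_⟩
  calc ∫⁻ p, ‖jumpDensity K f p‖ₑ ∂μ.prod μ
      = ∫⁻ y, eLpNorm (fun x ↦ f (x + y) - f x) 2 μ ^ 2 * ‖K y‖ₑ ∂μ := by
        rw [lintegral_prod_symm _ hmeas.enorm]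
        simp_rw [jumpDensity, enorm_mul, enorm_pow, enorm_norm,
          lintegral_mul_const' _ _ enorm_ne_top, eLpNorm_two_sq]
    _ ≤ ∫⁻ y, C * ‖ω y * K y‖ₑ ∂μ := by
        refine lintegral_mono fun y ↦ ?_
        rw [enorm_mul, ← mul_assoc]
        exact mul_le_mul_left (hω y) _
    _ = C * ∫⁻ y, ‖ω y * K y‖ₑ ∂μ := lintegral_const_mul' _ _ hC
    _ < ∞ := ENNReal.mul_lt_top hC.lt_top hint.2

end InvariantMeasure

section UpperGradient

variable {E F : Type*} [NormedAddCommGroup E] [NormedAddCommGroup F] {f : ℝ → E} {g : ℝ → F}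

/-- `‖g‖` is an upper gradient of `f` on the line: the increments of `f` are bounded by the
integrals of `‖g‖`. The function `g` is vector-valued so that a derivative of `f` qualifies. -/
def HasUpperGradient (f : ℝ → E) (g : ℝ → F) : Prop :=
  ∀ a b, ‖f b - f a‖ₑ ≤ ∫⁻ t in uIcc a b, ‖g t‖ₑ

lemma hasUpperGradient_deriv [NormedSpace ℝ E] (hf : ContDiff ℝ 1 f) :
    HasUpperGradient f (deriv f) := by
  intro a b
  wlog hab : a ≤ b generalizing a b
  · rw [enorm_sub_rev, uIcc_comm]
    exact this b a (le_of_not_ge hab)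
  rw [uIcc_of_le hab]
  exact enorm_sub_le_lintegral_deriv_of_contDiffOn_Icc hf.contDiffOn hab

namespace HasUpperGradient

lemma enorm_translate_sub_sq_le (h : HasUpperGradient f g) (hg : AEStronglyMeasurable g)
    (x y : ℝ) :
    ‖f (x + y) - f x‖ₑ ^ 2 ≤ ‖y‖ₑ * ∫⁻ t in uIcc 0 y, ‖g (x + t)‖ₑ ^ 2 := by
  have hmp := measurePreserving_add_left (volume : Measure ℝ) x
  have hshift : ∫⁻ t in uIcc x (x + y), ‖g t‖ₑ = ∫⁻ t in uIcc 0 y, ‖g (x + t)‖ₑ := by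
    rw [← hmp.setLIntegral_comp_preimage_emb (measurableEmbedding_addLeft x)]
    simp
  calc ‖f (x + y) - f x‖ₑ ^ 2 ≤ (∫⁻ t in uIcc 0 y, ‖g (x + t)‖ₑ) ^ 2 :=
        pow_le_pow_left' ((h x (x + y)).trans_eq hshift) 2
    _ ≤ volume (uIcc 0 y) * ∫⁻ t in uIcc 0 y, ‖g (x + t)‖ₑ ^ 2 := by
        rw [← Measure.restrict_apply_univ]
        exact sq_lintegral_le_measure_univ_mul (hg.comp_measurePreserving hmp).enorm.restrict
    _ = ‖y‖ₑ * ∫⁻ t in uIcc 0 y, ‖g (x + t)‖ₑ ^ 2 := by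
        rw [Real.volume_interval, sub_zero, Real.enorm_eq_ofReal_abs]

lemma eLpNorm_two_translate_sub_le (h : HasUpperGradient f g) (hg : AEStronglyMeasurable g)
    (y : ℝ) :
    eLpNorm (fun x ↦ f (x + y) - f x) 2 volume ≤ ‖y‖ₑ * eLpNorm g 2 volume := by
  have hmeas : AEMeasurable (fun p : ℝ × ℝ ↦ ‖g (p.1 + p.2)‖ₑ ^ 2)
      (volume.prod (volume.restrict (uIcc 0 y))) :=
    ((hg.comp_fst.comp_measurePreserving
      (measurePreserving_add_prod volume volume)).enorm.pow_const 2).mono_ac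
      (Measure.AbsolutelyContinuous.rfl.prod Measure.absolutelyContinuous_restrict)
  rw [← ENNReal.pow_le_pow_left_iff two_ne_zero, mul_pow, eLpNorm_two_sq, eLpNorm_two_sq]
  calc ∫⁻ x, ‖f (x + y) - f x‖ₑ ^ 2
      ≤ ∫⁻ x, ‖y‖ₑ * ∫⁻ t in uIcc 0 y, ‖g (x + t)‖ₑ ^ 2 :=
        lintegral_mono fun x ↦ h.enorm_translate_sub_sq_le hg x y
    _ = ‖y‖ₑ * ∫⁻ t in uIcc 0 y, ∫⁻ x, ‖g (x + t)‖ₑ ^ 2 := by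
        rw [lintegral_const_mul' _ _ enorm_ne_top, lintegral_lintegral_swap hmeas]
    _ = ‖y‖ₑ * ∫⁻ _ in uIcc 0 y, ∫⁻ x, ‖g x‖ₑ ^ 2 := by
        simp_rw [lintegral_add_right_eq_self (fun x ↦ ‖g x‖ₑ ^ 2)]
    _ = ‖y‖ₑ ^ 2 * ∫⁻ x, ‖g x‖ₑ ^ 2 := by
        rw [setLIntegral_const, Real.volume_interval, sub_zero, ← Real.enorm_eq_ofReal_abs]
        ring

/-- `∫ min 1 y² K y dy < ∞` is the integrability condition defining a Lévy measure. -/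
lemma integrable_jumpDensity (h : HasUpperGradient f g) (hf : MemLp f 2) (hg : MemLp g 2)
    {K : ℝ → ℝ} (hK : AEStronglyMeasurable K) (hint : Integrable fun y ↦ min 1 (y ^ 2) * K y) :
    Integrable (jumpDensity K f) := by
  set A := 2 * eLpNorm f 2 volume
  set B := eLpNorm g 2 volume
  have hC : A ^ 2 + B ^ 2 ≠ ∞ := by
    finiteness [hf.eLpNorm_ne_top, hg.eLpNorm_ne_top]
  refine integrable_jumpDensity_of_eLpNorm_translate_sub_le hK hf.1 hC (fun y ↦ ?_) hint
  rcases le_total 1 (y ^ 2) with hy | hy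
  · rw [min_eq_left hy, enorm_one, mul_one]
    exact (pow_le_pow_left' (eLpNorm_translate_sub_le one_le_two hf.1 y) 2).trans
      le_self_add
  · rw [min_eq_right hy, enorm_pow]
    calc eLpNorm (fun x ↦ f (x + y) - f x) 2 volume ^ 2 ≤ (‖y‖ₑ * B) ^ 2 :=
          pow_le_pow_left' (h.eLpNorm_two_translate_sub_le hg.1 y) 2
      _ = B ^ 2 * ‖y‖ₑ ^ 2 := by ring
      _ ≤ (A ^ 2 + B ^ 2) * ‖y‖ₑ ^ 2 := by gcongr; exact le_add_self

end HasUpperGradient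

end UpperGradient

lemma memLp_deriv_schwartzMap {E : Type*} [NormedAddCommGroup E] [NormedSpace ℝ E]
    (f : SchwartzMap ℝ E) (p : ℝ≥0∞) : MemLp (deriv f) p :=
  funext (SchwartzMap.derivCLM_apply ℝ f) ▸ (SchwartzMap.derivCLM ℝ E f).memLp p

lemma integrable_min_one_sq_mul_inv_sq : Integrable fun y : ℝ ↦ min 1 (y ^ 2) * (y ^ 2)⁻¹ := by
  refine (integrable_inv_one_add_sq.const_mul 2).mono' (by fun_prop) (ae_of_all _ fun y ↦ ?_)
  rw [Real.norm_of_nonneg (by positivity), ← div_eq_mul_inv, ← div_eq_mul_inv]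
  rcases eq_or_ne y 0 with rfl | hy
  · simp
  rw [div_le_div_iff₀ (by positivity) (by positivity)]
  rcases le_total 1 (y ^ 2) with h | h
  · rw [min_eq_left h]
    linarith
  · rw [min_eq_right h]
    nlinarith

section StripKernel

/-- The jump kernel of the strip with length scale `ℓ`, normalized to tend to `2 / y²`; its value at
`y = 0`, where the denominator vanishes, is `0`. -/
noncomputable def stripKernel (ℓ y : ℝ) : ℝ :=
  (ℓ ^ 2 * (Real.cosh (y / ℓ) - 1))⁻¹

lemma measurable_stripKernel (ℓ : ℝ) : Measurable (stripKernel ℓ) := by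
  unfold stripKernel
  fun_prop

lemma stripKernel_eq_sinh (ℓ y : ℝ) :
    stripKernel ℓ y = 2⁻¹ * ((ℓ * Real.sinh (y / 2 / ℓ)) ^ 2)⁻¹ := by
  have hcosh : Real.cosh (y / ℓ) - 1 = 2 * Real.sinh (y / 2 / ℓ) ^ 2 := by
    rw [show y / ℓ = 2 * (y / 2 / ℓ) by ring, Real.cosh_two_mul, Real.cosh_sq']
    ring
  rw [stripKernel, hcosh, ← mul_inv]
  ring

lemma abs_le_abs_mul_sinh_div {ℓ : ℝ} (hℓ : ℓ ≠ 0) (a : ℝ) : |a| ≤ |ℓ * Real.sinh (a / ℓ)| := by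
  calc |a| = |ℓ| * |a / ℓ| := by rw [← abs_mul, mul_div_cancel₀ a hℓ]
    _ ≤ |ℓ| * Real.sinh |a / ℓ| := by
        gcongr
        exact Real.self_le_sinh_iff.2 (abs_nonneg _)
    _ = |ℓ * Real.sinh (a / ℓ)| := by rw [abs_mul, Real.abs_sinh]

lemma tendsto_mul_sinh_div_atTop (a : ℝ) :
    Tendsto (fun ℓ : ℝ ↦ ℓ * Real.sinh (a / ℓ)) atTop (𝓝 a) := by
  have h : HasDerivAt (fun s : ℝ ↦ Real.sinh (a * s)) a 0 := by
    simpa using ((hasDerivAt_id (0 : ℝ)).const_mul a).sinh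
  simpa [Function.comp_def, div_eq_mul_inv] using
    h.tendsto_slope_zero_right.comp tendsto_inv_atTop_nhdsGT_zero

lemma norm_stripKernel_le (ℓ y : ℝ) : ‖stripKernel ℓ y‖ ≤ 2 * (y ^ 2)⁻¹ := by
  rw [stripKernel_eq_sinh, Real.norm_of_nonneg (by positivity)]
  rcases eq_or_ne ℓ 0 with rfl | hℓ
  · simpa using sq_nonneg y
  rcases eq_or_ne y 0 with rfl | hy
  · simp
  calc 2⁻¹ * ((ℓ * Real.sinh (y / 2 / ℓ)) ^ 2)⁻¹ ≤ 2⁻¹ * ((y / 2) ^ 2)⁻¹ := by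
        gcongr 2⁻¹ * ?_⁻¹
        exact sq_le_sq.2 (abs_le_abs_mul_sinh_div hℓ (y / 2))
    _ = 2 * (y ^ 2)⁻¹ := by ring

lemma tendsto_stripKernel_atTop (y : ℝ) :
    Tendsto (stripKernel · y) atTop (𝓝 (2 * (y ^ 2)⁻¹)) := by
  rcases eq_or_ne y 0 with rfl | hy
  · simp [stripKernel]
  have h := (((tendsto_mul_sinh_div_atTop (y / 2)).pow 2).inv₀ (by positivity)).const_mul 2⁻¹
  simp_rw [stripKernel_eq_sinh]
  convert h using 2
  ring

end StripKernel

theorem strip_jump_form_tendsto_cauchy_form_general {E F : Type*} [NormedAddCommGroup E]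
    [NormedAddCommGroup F] {f : ℝ → E} {g : ℝ → F} (h : HasUpperGradient f g) (hf : MemLp f 2)
    (hg : MemLp g 2) :
    Tendsto (fun ℓ ↦ jumpForm volume (stripKernel ℓ) f) atTop
      (𝓝 (2 * jumpForm volume (fun y ↦ (y ^ 2)⁻¹) f)) ∧
    Integrable (jumpDensity (fun y ↦ (y ^ 2)⁻¹) f) := by
  have hint : Integrable (jumpDensity (fun y ↦ (y ^ 2)⁻¹) f) :=
    h.integrable_jumpDensity hf hg (by fun_prop) integrable_min_one_sq_mul_inv_sq
  refine ⟨?_, hint⟩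
  rw [← jumpForm_const_mul]
  have hint_limit : Integrable (jumpDensity (fun y ↦ 2 * (y ^ 2)⁻¹) f) :=
    jumpDensity_const_mul 2 _ f ▸ hint.const_mul 2
  exact tendsto_jumpForm_of_norm_le_limit
    (Eventually.of_forall fun ℓ ↦ (measurable_stripKernel ℓ).aestronglyMeasurable) hf.1
    (Eventually.of_forall fun ℓ ↦ ae_of_all _ (norm_stripKernel_le ℓ))
    (ae_of_all _ tendsto_stripKernel_atTop) hint_limit

theorem strip_jump_form_tendsto_cauchy_form (f : SchwartzMap ℝ ℝ) :
    Filter.Tendsto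
      (fun ℓ : ℝ =>
        ∫ y : ℝ, ∫ x : ℝ, (f (x + y) - f x) ^ 2 / (ℓ ^ 2 * (Real.cosh (y / ℓ) - 1)))
      Filter.atTop
      (nhds (2 * ∫ y : ℝ, ∫ x : ℝ, (f (x + y) - f x) ^ 2 / y ^ 2)) ∧
    MeasureTheory.Integrable
      (fun p : ℝ × ℝ => (f (p.1 + p.2) - f p.1) ^ 2 / p.2 ^ 2) := by
  have h := strip_jump_form_tendsto_cauchy_form_general
    (hasUpperGradient_deriv (f.smooth 1)) (f.memLp 2)
    (memLp_deriv_schwartzMap f 2)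
  unfold jumpForm jumpDensity stripKernel at h
  simpa only [Real.norm_eq_abs, sq_abs, div_eq_mul_inv] using h
end

section
/- There exists a sequence (u_n) of continuously differentiable, compactly supported functions u_n : ℝ² → ℝ such that 0 ≤ u_n(x) ≤ 1 for all x, u_n(x) → 1 as n → ∞ for every x ∈ ℝ², lim_{n→∞} ∫_{ℝ²} |∇u_n(x)|² dx = 0, and lim_{n→∞} ∫_{ℝ} (∂₁u_n(x₁, 0))² dx₁ = 0, where ∂₁u_n denotes the partial derivative of u_n in its first variable and |∇u_n|² the squared Euclidean norm of its gradient. -/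
open Real MeasureTheory Filter
open scoped Topology

/-!
In the coordinate `t = log (1 + |x|²)` one has `|∇t|² = 4 e⁻ᵗ (1 - e⁻ᵗ)`, while the planar area
element, integrated over the angle, is `π eᵗ dt`. The exponentials cancel, so the Dirichlet energy
of `ψ (log (1 + |x|²))` is at most `4π ∫ ψ'²`, a one-dimensional energy, which is multiplied by `ε`
when `ψ` is replaced by its dilation `ψ (ε t)`. On the axis `|∇t|² ≤ 4 / (1 + x₁²)` is integrable,
so the axial energy of the dilated function is even `O(ε²)`.
-/

section RadialIntegral

variable {E : Type*} [NormedAddCommGroup E] [NormedSpace ℝ E]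

lemma integral_comp_sq_add_sq (g : ℝ → E) :
    ∫ x : ℝ × ℝ, g (x.1 ^ 2 + x.2 ^ 2) = π • ∫ s in Set.Ioi 0, g s := by
  have hball : volume.real (Metric.ball (0 : ℂ) 1) = π := by simp [measureReal_def]
  calc ∫ x : ℝ × ℝ, g (x.1 ^ 2 + x.2 ^ 2)
      = ∫ z : ℂ, g (‖z‖ ^ 2) := by
        rw [← Complex.volume_preserving_equiv_real_prod.integral_comp
          Complex.measurableEquivRealProd.measurableEmbedding]
        simp only [Complex.measurableEquivRealProd_apply, Complex.sq_norm, Complex.normSq_apply,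
          ← sq]
    _ = π • ∫ r in Set.Ioi (0 : ℝ), (2 * r ^ ((2 : ℝ) - 1)) • g (r ^ (2 : ℝ)) := by
        rw [integral_fun_norm_addHaar volume fun r => g (r ^ 2), hball,
          Complex.finrank_real_complex, smul_comm, ← Nat.cast_smul_eq_nsmul ℝ]
        simp only [mul_smul, integral_smul]
        norm_num
    _ = π • ∫ s in Set.Ioi 0, g s := by
        rw [integral_comp_rpow_Ioi_of_pos two_pos]

lemma integral_comp_exp_sub_one_Ioi (g : ℝ → E) :
    ∫ t in Set.Ioi 0, exp t • g (exp t - 1) = ∫ s in Set.Ioi 0, g s := by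
  have himage : (fun t => exp t - 1) '' Set.Ioi 0 = Set.Ioi 0 := by
    ext s
    refine ⟨?_, fun hs => ⟨log (1 + s), log_pos (by simpa using hs), ?_⟩⟩
    · rintro ⟨t, ht, rfl⟩
      simpa using ht
    · have hs' : 0 < 1 + s := add_pos one_pos hs
      simp [exp_log hs']
  have hderiv (t : ℝ) : HasDerivWithinAt (fun t => exp t - 1) (exp t) (Set.Ioi 0) t :=
    ((hasDerivAt_exp t).sub_const 1).hasDerivWithinAt
  have hmono : MonotoneOn (fun t => exp t - 1) (Set.Ioi 0) := fun s _ t _ hst => by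
    simpa using hst
  rw [← integral_image_eq_integral_deriv_smul_of_monotoneOn measurableSet_Ioi
    (fun t _ => hderiv t) hmono, himage]

end RadialIntegral

/-- The squared Euclidean norm of the gradient of a function on the plane. The norm of `fderiv` is
not used because `ℝ × ℝ` carries the supremum norm. -/
noncomputable def gradNormSq (u : ℝ × ℝ → ℝ) (x : ℝ × ℝ) : ℝ :=
  fderiv ℝ u x (1, 0) ^ 2 + fderiv ℝ u x (0, 1) ^ 2

lemma gradNormSq_nonneg (u : ℝ × ℝ → ℝ) (x : ℝ × ℝ) : 0 ≤ gradNormSq u x :=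
  add_nonneg (sq_nonneg _) (sq_nonneg _)

lemma sq_fderiv_fst_le_gradNormSq (u : ℝ × ℝ → ℝ) (x : ℝ × ℝ) :
    fderiv ℝ u x (1, 0) ^ 2 ≤ gradNormSq u x :=
  le_add_of_nonneg_right (sq_nonneg _)

lemma gradNormSq_comp {ψ : ℝ → ℝ} {u : ℝ × ℝ → ℝ} {x : ℝ × ℝ}
    (hψ : DifferentiableAt ℝ ψ (u x)) (hu : DifferentiableAt ℝ u x) :
    gradNormSq (ψ ∘ u) x = deriv ψ (u x) ^ 2 * gradNormSq u x := by
  simp only [gradNormSq, (hψ.hasDerivAt.comp_hasFDerivAt x hu.hasFDerivAt).fderiv,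
    smul_apply, smul_eq_mul]
  ring

/-- The logarithmic radial coordinate of the plane. It grows like `2 log |x|` at infinity;
adding `1` to `|x|²` makes it smooth at the origin. -/
noncomputable def logRadius (x : ℝ × ℝ) : ℝ := log (1 + (x.1 ^ 2 + x.2 ^ 2))

lemma contDiff_logRadius {n : WithTop ℕ∞} : ContDiff ℝ n logRadius :=
  ContDiff.log (by fun_prop) fun x => by positivity

lemma differentiable_logRadius : Differentiable ℝ logRadius :=
  contDiff_logRadius.differentiable one_ne_zero

lemma exp_neg_logRadius (x : ℝ × ℝ) : exp (-logRadius x) = (1 + (x.1 ^ 2 + x.2 ^ 2))⁻¹ := by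
  rw [exp_neg, logRadius, exp_log (by positivity)]

lemma tendsto_logRadius_cocompact : Tendsto logRadius (cocompact (ℝ × ℝ)) atTop := by
  have hle (x : ℝ × ℝ) : ‖x‖ ≤ 1 + (x.1 ^ 2 + x.2 ^ 2) := by
    rw [Prod.norm_def, max_le_iff, norm_eq_abs, norm_eq_abs]
    constructor <;> nlinarith [sq_abs x.1, sq_abs x.2, sq_nonneg (|x.1| - 1), sq_nonneg (|x.2| - 1)]
  exact tendsto_log_atTop.comp (tendsto_atTop_mono hle tendsto_norm_cocompact_atTop)

lemma hasCompactSupport_comp_logRadius {ψ : ℝ → ℝ} (hψ : HasCompactSupport ψ) :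
    HasCompactSupport (ψ ∘ logRadius) := by
  rw [hasCompactSupport_iff_eventuallyEq, coclosedCompact_eq_cocompact] at hψ ⊢
  exact (tendsto_logRadius_cocompact.mono_right atTop_le_cocompact).eventually hψ

lemma fderiv_logRadius_apply (x v : ℝ × ℝ) :
    fderiv ℝ logRadius x v = 2 * (x.1 * v.1 + x.2 * v.2) / (1 + (x.1 ^ 2 + x.2 ^ 2)) := by
  have hne : 1 + (x.1 ^ 2 + x.2 ^ 2) ≠ 0 := by positivity
  have hderiv : HasFDerivAt logRadius _ x :=
    (((hasFDerivAt_fst.pow 2).add (hasFDerivAt_snd.pow 2)).const_add 1).log hne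
  rw [hderiv.fderiv, div_eq_inv_mul]
  simp [mul_add, mul_assoc]

lemma gradNormSq_logRadius (x : ℝ × ℝ) :
    gradNormSq logRadius x = 4 * exp (-logRadius x) * (1 - exp (-logRadius x)) := by
  rw [gradNormSq, fderiv_logRadius_apply, fderiv_logRadius_apply, exp_neg_logRadius]
  field_simp
  ring

lemma gradNormSq_logRadius_le (x : ℝ × ℝ) :
    gradNormSq logRadius x ≤ 4 * exp (-logRadius x) := by
  rw [gradNormSq_logRadius]
  exact mul_le_of_le_one_right (by positivity) (sub_le_self _ (exp_pos _).le)

lemma integral_comp_logRadius {E : Type*} [NormedAddCommGroup E] [NormedSpace ℝ E] (f : ℝ → E) :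
    ∫ x, f (logRadius x) = π • ∫ t in Set.Ioi 0, exp t • f t := by
  simp only [logRadius]
  rw [integral_comp_sq_add_sq fun s => f (log (1 + s)), ← integral_comp_exp_sub_one_Ioi]
  simp only [add_sub_cancel, log_exp]

lemma integral_gradNormSq_comp_logRadius {ψ : ℝ → ℝ} (hψ : Differentiable ℝ ψ) :
    ∫ x, gradNormSq (ψ ∘ logRadius) x =
      4 * π * ∫ t in Set.Ioi 0, (1 - exp (-t)) * deriv ψ t ^ 2 := by
  calc ∫ x, gradNormSq (ψ ∘ logRadius) x
      = ∫ x, deriv ψ (logRadius x) ^ 2 *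
          (4 * exp (-logRadius x) * (1 - exp (-logRadius x))) := by
        simp only [gradNormSq_comp (hψ _) differentiable_logRadius.differentiableAt,
          gradNormSq_logRadius]
    _ = π • ∫ t in Set.Ioi 0, exp t • (deriv ψ t ^ 2 * (4 * exp (-t) * (1 - exp (-t)))) :=
        integral_comp_logRadius fun t => deriv ψ t ^ 2 * (4 * exp (-t) * (1 - exp (-t)))
    _ = π * ∫ t in Set.Ioi 0, 4 * ((1 - exp (-t)) * deriv ψ t ^ 2) := by
        rw [smul_eq_mul]
        congr with t
        rw [smul_eq_mul, exp_neg]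
        field_simp
    _ = 4 * π * ∫ t in Set.Ioi 0, (1 - exp (-t)) * deriv ψ t ^ 2 := by
        rw [integral_const_mul]
        ring

lemma integral_gradNormSq_comp_logRadius_le {ψ : ℝ → ℝ} (hψ : Differentiable ℝ ψ)
    (hL2 : IntegrableOn (fun t => deriv ψ t ^ 2) (Set.Ioi 0)) :
    ∫ x, gradNormSq (ψ ∘ logRadius) x ≤ 4 * π * ∫ t in Set.Ioi 0, deriv ψ t ^ 2 := by
  rw [integral_gradNormSq_comp_logRadius hψ]
  gcongr 4 * π * ?_
  refine integral_mono_of_nonneg ?_ hL2 (ae_of_all _ fun t =>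
    mul_le_of_le_one_left (sq_nonneg _) (sub_le_self _ (exp_pos _).le))
  filter_upwards [ae_restrict_mem measurableSet_Ioi] with t ht
  have hexp : exp (-t) ≤ 1 := exp_le_one_iff.2 (neg_nonpos.2 (le_of_lt ht))
  exact mul_nonneg (sub_nonneg.2 hexp) (sq_nonneg _)

lemma integral_sq_fderiv_comp_logRadius_axis_le {ψ : ℝ → ℝ} (hψ : Differentiable ℝ ψ) {C : ℝ}
    (hC : ∀ t, deriv ψ t ^ 2 ≤ C) :
    ∫ x : ℝ, fderiv ℝ (ψ ∘ logRadius) (x, 0) (1, 0) ^ 2 ≤ 4 * π * C := by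
  have hbound (x : ℝ) :
      fderiv ℝ (ψ ∘ logRadius) (x, 0) (1, 0) ^ 2 ≤ C * (4 * (1 + x ^ 2)⁻¹) :=
    calc fderiv ℝ (ψ ∘ logRadius) (x, 0) (1, 0) ^ 2
        ≤ deriv ψ (logRadius (x, 0)) ^ 2 * gradNormSq logRadius (x, 0) :=
          (sq_fderiv_fst_le_gradNormSq _ _).trans_eq
            (gradNormSq_comp (hψ _) differentiable_logRadius.differentiableAt)
      _ ≤ C * (4 * exp (-logRadius (x, 0))) :=
          mul_le_mul (hC _) (gradNormSq_logRadius_le _) (gradNormSq_nonneg _ _)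
            ((sq_nonneg _).trans (hC 0))
      _ = C * (4 * (1 + x ^ 2)⁻¹) := by simp [exp_neg_logRadius]
  calc ∫ x : ℝ, fderiv ℝ (ψ ∘ logRadius) (x, 0) (1, 0) ^ 2
      ≤ ∫ x : ℝ, C * (4 * (1 + x ^ 2)⁻¹) :=
        integral_mono_of_nonneg (ae_of_all _ fun x => sq_nonneg _)
          ((integrable_inv_one_add_sq.const_mul 4).const_mul C) (ae_of_all _ hbound)
    _ = 4 * π * C := by
        rw [integral_const_mul, integral_const_mul, integral_univ_inv_one_add_sq]
        ring

lemma sq_deriv_comp_mul_left (φ : ℝ → ℝ) (ε t : ℝ) :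
    deriv (fun t => φ (ε * t)) t ^ 2 = ε ^ 2 * deriv φ (ε * t) ^ 2 := by
  rw [deriv_comp_mul_left, smul_eq_mul, mul_pow]

/-- The radial cutoff with profile `φ` at scale `ε`, which equals `φ 0` on larger and larger disks
as `ε → 0⁺` if `φ` is constant near `0`. -/
noncomputable def logCutoff (φ : ℝ → ℝ) (ε : ℝ) : ℝ × ℝ → ℝ := (fun t => φ (ε * t)) ∘ logRadius

section LogCutoff

variable {φ : ℝ → ℝ} {ε : ℝ}

lemma contDiff_logCutoff {n : WithTop ℕ∞} (hφ : ContDiff ℝ n φ) : ContDiff ℝ n (logCutoff φ ε) :=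
  (hφ.comp (contDiff_const.mul contDiff_id)).comp contDiff_logRadius

lemma hasCompactSupport_logCutoff (hφ : HasCompactSupport φ) (hε : ε ≠ 0) :
    HasCompactSupport (logCutoff φ ε) :=
  hasCompactSupport_comp_logRadius (hφ.comp_homeomorph (Homeomorph.mulLeft₀ ε hε))

lemma tendsto_logCutoff (hφ : ContinuousAt φ 0) (x : ℝ × ℝ) :
    Tendsto (fun ε => logCutoff φ ε x) (𝓝 0) (𝓝 (φ 0)) := by
  have hscale : Tendsto (fun ε => ε * logRadius x) (𝓝 0) (𝓝 0) := by
    simpa using (continuous_mul_const (logRadius x)).tendsto 0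
  exact hφ.tendsto.comp hscale

lemma integral_gradNormSq_logCutoff_le (hφ : Differentiable ℝ φ)
    (hL2 : IntegrableOn (fun t => deriv φ t ^ 2) (Set.Ioi 0)) (hε : 0 < ε) :
    ∫ x, gradNormSq (logCutoff φ ε) x ≤ ε * (4 * π * ∫ t in Set.Ioi 0, deriv φ t ^ 2) := by
  have hL2_scaled : IntegrableOn (fun t => deriv φ (ε * t) ^ 2) (Set.Ioi 0) := by
    rwa [integrableOn_Ioi_comp_mul_left_iff (fun t => deriv φ t ^ 2) 0 hε, mul_zero]
  calc ∫ x, gradNormSq (logCutoff φ ε) x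
      ≤ 4 * π * ∫ t in Set.Ioi 0, deriv (fun t => φ (ε * t)) t ^ 2 := by
        refine integral_gradNormSq_comp_logRadius_le (by fun_prop) ?_
        simp only [sq_deriv_comp_mul_left]
        exact hL2_scaled.const_mul (ε ^ 2)
    _ = ε * (4 * π * ∫ t in Set.Ioi 0, deriv φ t ^ 2) := by
        simp only [sq_deriv_comp_mul_left]
        rw [integral_const_mul, integral_comp_mul_left_Ioi (fun t => deriv φ t ^ 2) 0 hε, mul_zero,
          smul_eq_mul]
        field_simp

lemma tendsto_integral_gradNormSq_logCutoff (hφ : Differentiable ℝ φ)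
    (hL2 : IntegrableOn (fun t => deriv φ t ^ 2) (Set.Ioi 0)) :
    Tendsto (fun ε => ∫ x, gradNormSq (logCutoff φ ε) x) (𝓝[>] 0) (𝓝 0) := by
  refine squeeze_zero' (.of_forall fun ε => integral_nonneg (gradNormSq_nonneg _))
    (eventually_mem_nhdsWithin.mono fun ε hε => integral_gradNormSq_logCutoff_le hφ hL2 hε) ?_
  exact tendsto_nhdsWithin_of_tendsto_nhds ((continuous_mul_const _).tendsto' 0 0 (zero_mul _))

lemma tendsto_integral_sq_fderiv_logCutoff_axis (hφ : Differentiable ℝ φ) {C : ℝ}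
    (hC : ∀ t, deriv φ t ^ 2 ≤ C) :
    Tendsto (fun ε => ∫ x : ℝ, fderiv ℝ (logCutoff φ ε) (x, 0) (1, 0) ^ 2) (𝓝 0) (𝓝 0) := by
  refine squeeze_zero (fun ε => integral_nonneg fun x => sq_nonneg _)
    (fun ε => integral_sq_fderiv_comp_logRadius_axis_le (C := ε ^ 2 * C) (by fun_prop) fun t => ?_)
    ?_
  · rw [sq_deriv_comp_mul_left]
    gcongr
    exact hC _
  · exact Continuous.tendsto' (by fun_prop) 0 0 (by simp)

end LogCutoff

theorem exists_recurrence_sequence :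
    ∃ u : ℕ → (ℝ × ℝ) → ℝ,
      (∀ n, ContDiff ℝ 1 (u n)) ∧
      (∀ n, HasCompactSupport (u n)) ∧
      (∀ n x, 0 ≤ u n x ∧ u n x ≤ 1) ∧
      (∀ x, Filter.Tendsto (fun n => u n x) Filter.atTop (nhds 1)) ∧
      Filter.Tendsto
        (fun n => ∫ x : ℝ × ℝ,
          ((fderiv ℝ (u n) x (1, 0)) ^ 2 + (fderiv ℝ (u n) x (0, 1)) ^ 2))
        Filter.atTop (nhds 0) ∧
      Filter.Tendsto
        (fun n => ∫ x₁ : ℝ, (fderiv ℝ (u n) (x₁, 0) (1, 0)) ^ 2)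
        Filter.atTop (nhds 0) := by
  let φ : ContDiffBump (0 : ℝ) := default
  have hφ : ContDiff ℝ 1 φ := φ.contDiff
  have hφ' : Continuous fun t => deriv φ t ^ 2 := (hφ.continuous_deriv le_rfl).pow 2
  have hsupp : HasCompactSupport fun t => deriv φ t ^ 2 :=
    φ.hasCompactSupport.deriv.comp_left (g := (· ^ 2)) (by simp)
  obtain ⟨C, hC⟩ := hsupp.exists_bound_of_continuous hφ'
  have hdiff : Differentiable ℝ φ := hφ.differentiable one_ne_zero
  have hε : Tendsto (fun n : ℕ => 1 / ((n : ℝ) + 1)) atTop (𝓝 0) :=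
    tendsto_one_div_add_atTop_nhds_zero_nat
  have hε_pos (n : ℕ) : 0 < 1 / ((n : ℝ) + 1) := Nat.one_div_pos_of_nat
  have hφ0 : φ 0 = 1 := φ.eventuallyEq_one.eq_of_nhds
  refine ⟨fun n => logCutoff φ (1 / (n + 1)), fun n => contDiff_logCutoff hφ,
    fun n => hasCompactSupport_logCutoff φ.hasCompactSupport (hε_pos n).ne',
    fun n x => ⟨φ.nonneg, φ.le_one⟩, fun x => ?_, ?_, ?_⟩
  · simpa only [hφ0, Function.comp_def] using
      (tendsto_logCutoff φ.continuous.continuousAt x).comp hε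
  · exact (tendsto_integral_gradNormSq_logCutoff hdiff
      (hφ'.integrable_of_hasCompactSupport hsupp).integrableOn).comp
      (tendsto_nhdsWithin_iff.2 ⟨hε, .of_forall hε_pos⟩)
  · exact (tendsto_integral_sq_fderiv_logCutoff_axis hdiff fun t =>
      (le_abs_self _).trans (hC t)).comp hε
end
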